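/- For a compact metric space X, the collection Perf(X) of non-empty perfect subsets of X is a G_δ subset of the hyperspace 2^X with the Hausdorff metric; moreover, if X itself is perfect, then Perf(X) is a dense G_δ subset of 2^X. -/

import Mathlib

open TopologicalSpace

theorem perf_isGdelta_aux (X : Type*) [MetricSpace X] [CompactSpace X] :
    IsGδ {A : NonemptyCompacts X | Perfect (A : Set X)} := by
  have hopen : ∀ U : Set X, IsOpen U →
      IsOpen {A : NonemptyCompacts X | ((A : Set X) ∩ U).Nonempty} := fun U hU =>
    NonemptyCompacts.isOpen_inter_nonempty_of_isOpen hU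
  have hnt : ∀ U : Set X, IsOpen U →
      IsOpen {A : NonemptyCompacts X | ((A : Set X) ∩ U).Nontrivial} := by
    intro U hU
    rw [isOpen_iff_mem_nhds]
    rintro A ⟨x, ⟨hxA, hxU⟩, y, ⟨hyA, hyU⟩, hxy⟩
    obtain ⟨V, W, hV, hW, hxV, hyW, hd⟩ := t2_separation hxy
    filter_upwards [(hopen _ (hV.inter hU)).mem_nhds (⟨x, hxA, hxV, hxU⟩),
      (hopen _ (hW.inter hU)).mem_nhds (⟨y, hyA, hyW, hyU⟩)]
    rintro B ⟨p, hpB, hpV, hpU⟩ ⟨q, hqB, hqW, hqU⟩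
    exact ⟨p, ⟨hpB, hpU⟩, q, ⟨hqB, hqU⟩, hd.ne_of_mem hpV hqW⟩
  have key : {A : NonemptyCompacts X | Perfect (A : Set X)} =
      ⋂ U ∈ countableBasis X, ({A : NonemptyCompacts X | ((A : Set X) ∩ U).Nonempty}ᶜ ∪
        {A : NonemptyCompacts X | ((A : Set X) ∩ U).Nontrivial}) := by
    ext A
    simp only [Set.mem_ofPred_eq, Set.mem_iInter, Set.mem_union, Set.mem_compl_iff]
    constructor
    · intro h U hU
      by_cases hn : ((A : Set X) ∩ U).Nonempty
      · right
        obtain ⟨x, hxA, hxU⟩ := hn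
        obtain ⟨y, ⟨hyU, hyA⟩, hne⟩ := preperfect_iff_nhds.1 h.acc x hxA U
          ((isOpen_of_mem_countableBasis hU).mem_nhds hxU)
        exact ⟨y, ⟨hyA, hyU⟩, x, ⟨hxA, hxU⟩, hne⟩
      · exact Or.inl hn
    · intro h
      refine ⟨A.isCompact.isClosed, preperfect_iff_nhds.2 fun x hx U hU => ?_⟩
      obtain ⟨V, hV, hxV, hVU⟩ := (isBasis_countableBasis X).mem_nhds_iff.1 hU
      rcases h V hV with h | h
      · exact absurd ⟨x, hx, hxV⟩ h
      · obtain ⟨y, ⟨hyA, hyV⟩, hne⟩ := h.exists_ne x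
        exact ⟨y, ⟨hVU hyV, hyA⟩, hne⟩
  rw [key]
  refine IsGδ.biInter (countable_countableBasis X) fun U hU => ?_
  have hU' := isOpen_of_mem_countableBasis hU
  exact (hopen U hU').isClosed_compl.isGδ.union (hnt U hU').isGδ

theorem perf_dense_aux (X : Type*) [MetricSpace X] [CompactSpace X]
    (h : Perfect (Set.univ : Set X)) :
    Dense {A : NonemptyCompacts X | Perfect (A : Set X)} := by
  rw [Metric.dense_iff]
  intro A r hr
  have hsub : (A : Set X) ⊆ Metric.thickening (r / 2) (A : Set X) :=
    Metric.self_subset_thickening (half_pos hr) _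
  refine ⟨⟨⟨closure (Metric.thickening (r / 2) (A : Set X)), isClosed_closure.isCompact⟩,
    (A.nonempty.mono hsub).closure⟩, ?_, ?_⟩
  · rw [Metric.mem_ball, Metric.NonemptyCompacts.dist_eq]
    change Metric.hausdorffDist (closure (Metric.thickening (r / 2) (A : Set X))) A < r
    rw [Metric.hausdorffDist_closure₁]
    refine lt_of_le_of_lt (Metric.hausdorffDist_le_of_mem_dist (half_pos hr).le ?_ ?_)
      (half_lt_self hr)
    · intro x hx
      obtain ⟨z, hz, hd⟩ := Metric.mem_thickening_iff.1 hx
      exact ⟨z, hz, hd.le⟩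
    · intro x hx
      exact ⟨x, hsub hx, by simpa using (half_pos hr).le⟩
  · change Perfect (closure (Metric.thickening (r / 2) (A : Set X)))
    have := h.acc.open_inter (Metric.isOpen_thickening (δ := r / 2) (E := (A : Set X)))
    rw [Set.inter_univ] at this
    exact this.perfect_closure


/-- For a compact metric space `X`, the collection of non-empty perfect subsets
is a Gδ subset of the hyperspace `2^X` (non-empty closed = compact subsets with
the Hausdorff metric); moreover, if `X` itself is perfect then this collection
is a dense Gδ subset of `2^X`. -/
theorem stmt13 (X : Type*) [MetricSpace X] [CompactSpace X] :
    IsGδ {A : NonemptyCompacts X | Perfect (A : Set X)} ∧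
    (Perfect (Set.univ : Set X) →
      Dense {A : NonemptyCompacts X | Perfect (A : Set X)}) := by
  exact ⟨perf_isGdelta_aux X, perf_dense_aux X⟩
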